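/- arXiv:2006.01498 — 2 statements merged into one kernel-verified Lean document; each statement's English description precedes it below -/
import Mathlib

section
/- Propagation equation for the torsion (equation (e0Cijb) of Lemma 4.4): assume K_ij = K_ji and Γ_ijb = −Γ_ibj identically on ℝ⁴, and that (E-f), (E-f⁻¹) and (E-Γ) hold at every point of ℝ⁴. Then for all i, j, b ∈ {1,2,3}: ∂_t C_ijb = Σ_l [ K_bl C_ijl − K_il C_ljb − K_jl C_ilb ] − δ_ib R̂_j0 + δ_jb R̂_i0 at every point of ℝ⁴. -/
open scoped BigOperators

noncomputable section

/-- Points of `ℝ⁴ = ℝ_t × ℝ³`; coordinate `0` is time. -/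
abbrev Pt : Type := Fin 4 → ℝ

/-- Coordinate partial derivative `∂_μ u`. -/
def pd (μ : Fin 4) (u : Pt → ℝ) (p : Pt) : ℝ := fderiv ℝ u p (Pi.single μ 1)

/-- Frame derivative `e_i u = Σ_j f_i^j ∂_j u` along the spatial frame `f`. -/
def fr (f : Fin 3 → Fin 3 → Pt → ℝ) (i : Fin 3) (u : Pt → ℝ) (p : Pt) : ℝ :=
  ∑ j : Fin 3, f i j p * pd j.succ u p

/-- `tr K = Σ_c K_cc`. -/
def trK (K : Fin 3 → Fin 3 → Pt → ℝ) (p : Pt) : ℝ := ∑ c : Fin 3, K c c p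

/-- `|K|² = Σ_{i,j} (K_ij)²`. -/
def nK2 (K : Fin 3 → Fin 3 → Pt → ℝ) (p : Pt) : ℝ :=
  ∑ i : Fin 3, ∑ j : Fin 3, (K i j p) ^ 2

/-- `|Γ|² = Σ_{i,j,b} (Γ_ijb)²`. -/
def nG2 (G : Fin 3 → Fin 3 → Fin 3 → Pt → ℝ) (p : Pt) : ℝ :=
  ∑ i : Fin 3, ∑ j : Fin 3, ∑ b : Fin 3, (G i j b p) ^ 2

/-- Kronecker delta. -/
def kd (i j : Fin 3) : ℝ := if i = j then 1 else 0

/-- The modified evolution equation (E-K) for `K_ij` at the point `p`. -/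
def EK (f K : Fin 3 → Fin 3 → Pt → ℝ) (G : Fin 3 → Fin 3 → Fin 3 → Pt → ℝ)
    (i j : Fin 3) (p : Pt) : Prop :=
  pd 0 (K i j) p + trK K p * K i j p =
    (1 / 2) * ( fr f i (fun q => ∑ b : Fin 3, G b j b q) p
      - (∑ b : Fin 3, fr f b (G i j b) p)
      + (∑ b : Fin 3, ∑ c : Fin 3, G b i c p * G c j b p)
      + (∑ b : Fin 3, ∑ c : Fin 3, G b b c p * G i j c p)
      + fr f j (fun q => ∑ b : Fin 3, G b i b q) p
      - (∑ b : Fin 3, fr f b (G j i b) p)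
      + (∑ b : Fin 3, ∑ c : Fin 3, G b j c p * G c i b p)
      + (∑ b : Fin 3, ∑ c : Fin 3, G b b c p * G j i c p) )
    - (1 / 2) * kd i j *
      ( 2 * (∑ a : Fin 3, fr f a (fun q => ∑ b : Fin 3, G b a b q) p)
      + (∑ b : Fin 3, ∑ a : Fin 3, ∑ c : Fin 3, G b a c p * G c a b p)
      + (∑ c : Fin 3, (∑ b : Fin 3, G b b c p) * (∑ a : Fin 3, G a a c p))
      + nK2 K p - (trK K p) ^ 2 )

/-- The unmodified evolution equation (E-K₀) for `K_ij` at the point `p`. -/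
def EK0 (f K : Fin 3 → Fin 3 → Pt → ℝ) (G : Fin 3 → Fin 3 → Fin 3 → Pt → ℝ)
    (i j : Fin 3) (p : Pt) : Prop :=
  pd 0 (K i j) p + trK K p * K i j p =
    (1 / 2) * ( fr f i (fun q => ∑ b : Fin 3, G b j b q) p
      - (∑ b : Fin 3, fr f b (G i j b) p)
      + (∑ b : Fin 3, ∑ c : Fin 3, G b i c p * G c j b p)
      + (∑ b : Fin 3, ∑ c : Fin 3, G b b c p * G i j c p)
      + fr f j (fun q => ∑ b : Fin 3, G b i b q) p
      - (∑ b : Fin 3, fr f b (G j i b) p)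
      + (∑ b : Fin 3, ∑ c : Fin 3, G b j c p * G c i b p)
      + (∑ b : Fin 3, ∑ c : Fin 3, G b b c p * G j i c p) )

/-- The modified evolution equation (E-Γ) for `Γ_ijb` at the point `p`. -/
def EG (f K : Fin 3 → Fin 3 → Pt → ℝ) (G : Fin 3 → Fin 3 → Fin 3 → Pt → ℝ)
    (i j b : Fin 3) (p : Pt) : Prop :=
  pd 0 (G i j b) p + (∑ c : Fin 3, K i c p * G c j b p) =
    fr f j (K b i) p - fr f b (K j i) p
    - (∑ c : Fin 3, G j b c p * K c i p) - (∑ c : Fin 3, G j i c p * K b c p)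
    + (∑ c : Fin 3, G b j c p * K c i p) + (∑ c : Fin 3, G b i c p * K j c p)
    + kd i b * ( (∑ c : Fin 3, fr f c (K c j) p)
      - (∑ c : Fin 3, ∑ l : Fin 3, G c c l p * K l j p)
      - (∑ c : Fin 3, ∑ l : Fin 3, G c j l p * K c l p)
      - fr f j (trK K) p )
    - kd i j * ( (∑ c : Fin 3, fr f c (K c b) p)
      - (∑ c : Fin 3, ∑ l : Fin 3, G c c l p * K l b p)
      - (∑ c : Fin 3, ∑ l : Fin 3, G c b l p * K c l p)
      - fr f b (trK K) p )

/-- The unmodified evolution equation (E-Γ₀) for `Γ_ijb` at the point `p`. -/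
def EG0 (f K : Fin 3 → Fin 3 → Pt → ℝ) (G : Fin 3 → Fin 3 → Fin 3 → Pt → ℝ)
    (i j b : Fin 3) (p : Pt) : Prop :=
  pd 0 (G i j b) p + (∑ c : Fin 3, K i c p * G c j b p) =
    fr f j (K b i) p - fr f b (K j i) p
    - (∑ c : Fin 3, G j b c p * K c i p) - (∑ c : Fin 3, G j i c p * K b c p)
    + (∑ c : Fin 3, G b j c p * K c i p) + (∑ c : Fin 3, G b i c p * K j c p)

/-- The frame evolution equation (E-f) at every point. -/
def Ef (f K : Fin 3 → Fin 3 → Pt → ℝ) : Prop :=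
  ∀ (i j : Fin 3) (p : Pt), pd 0 (f i j) p + (∑ c : Fin 3, K i c p * f c j p) = 0

/-- The inverse frame evolution equation (E-f⁻¹) at every point. -/
def Efi (fi K : Fin 3 → Fin 3 → Pt → ℝ) : Prop :=
  ∀ (b j : Fin 3) (p : Pt), pd 0 (fi b j) p - (∑ c : Fin 3, K c b p * fi c j p) = 0

/-- Torsion components `C_ijb = Σ_l f^b_l (e_i f_j^l − e_j f_i^l) − Γ_ijb + Γ_jib`. -/
def Tor (f fi : Fin 3 → Fin 3 → Pt → ℝ) (G : Fin 3 → Fin 3 → Fin 3 → Pt → ℝ)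
    (i j b : Fin 3) (p : Pt) : ℝ :=
  (∑ l : Fin 3, fi b l p * (fr f i (f j l) p - fr f j (f i l) p)) - G i j b p + G j i b p

/-- Spatial covariant derivative `D̃_j K_bi = e_j K_bi − Σ_l Γ_jbl K_li − Σ_l Γ_jil K_bl`. -/
def DtK (f K : Fin 3 → Fin 3 → Pt → ℝ) (G : Fin 3 → Fin 3 → Fin 3 → Pt → ℝ)
    (j b i : Fin 3) (p : Pt) : ℝ :=
  fr f j (K b i) p - (∑ l : Fin 3, G j b l p * K l i p) - (∑ l : Fin 3, G j i l p * K b l p)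

/-- `R̂_b0 = Σ_i D̃_i K_bi − e_b (tr K)`. -/
def Rb0 (f K : Fin 3 → Fin 3 → Pt → ℝ) (G : Fin 3 → Fin 3 → Fin 3 → Pt → ℝ)
    (b : Fin 3) (p : Pt) : ℝ :=
  (∑ i : Fin 3, DtK f K G i b i p) - fr f b (trK K) p

/-- Modified spatial curvature `R̂_aijb`. -/
def Rhat (f : Fin 3 → Fin 3 → Pt → ℝ) (G : Fin 3 → Fin 3 → Fin 3 → Pt → ℝ)
    (a i j b : Fin 3) (p : Pt) : ℝ :=
  fr f a (G i j b) p - fr f i (G a j b) p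
  - (∑ c : Fin 3, G a b c p * G i j c p)
  + (∑ c : Fin 3, G i b c p * G a j c p)
  - (∑ c : Fin 3, (G a i c p - G i a c p) * G c j b p)

/-- Modified spatial Ricci contraction `r̂_ij = Σ_b R̂_bijb`. -/
def rhat (f : Fin 3 → Fin 3 → Pt → ℝ) (G : Fin 3 → Fin 3 → Fin 3 → Pt → ℝ)
    (i j : Fin 3) (p : Pt) : ℝ :=
  ∑ b : Fin 3, Rhat f G b i j b p

/-- Spatial covariant derivative of the torsion, `D̃_j C_aib`. -/
def DtC (f fi : Fin 3 → Fin 3 → Pt → ℝ) (G : Fin 3 → Fin 3 → Fin 3 → Pt → ℝ)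
    (j a i b : Fin 3) (p : Pt) : ℝ :=
  fr f j (Tor f fi G a i b) p
  - (∑ l : Fin 3, G j a l p * Tor f fi G l i b p)
  - (∑ l : Fin 3, G j i l p * Tor f fi G a l b p)
  - (∑ l : Fin 3, G j b l p * Tor f fi G a i l p)

/-!
Write the torsion as the difference of the structure coefficients `⟨[e_i, e_j], e^b⟩` of the frame
and the antisymmetrized connection coefficients `Γ_ijb − Γ_jib`. Since (E-f) says
`∂_t e_i = −K_ic e_c`, both families obey the linear transport equation `∂_t X = K · X` of
components in the moving frame, up to the common source `e_j K_ib − e_i K_jb`: for the bracket it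
comes from differentiating `K` in `[∂_t e_i, e_j] + [e_i, ∂_t e_j]`, for the connection from the
terms `D̃_j K_bi − D̃_i K_bj` of (E-Γ). The source cancels in the difference, leaving only the
constraint terms `R̂_b0` by which (E-Γ) has been modified.
-/

section PartialDerivatives

variable {u v : Pt → ℝ} {p : Pt} (μ ν : Fin 4)

lemma pd_neg : pd μ (fun q => -u q) p = -pd μ u p := by
  simp [pd, fderiv_fun_neg]

lemma pd_sub (hu : DifferentiableAt ℝ u p) (hv : DifferentiableAt ℝ v p) :
    pd μ (fun q => u q - v q) p = pd μ u p - pd μ v p := by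
  simp [pd, fderiv_fun_sub hu hv]

lemma pd_mul (hu : DifferentiableAt ℝ u p) (hv : DifferentiableAt ℝ v p) :
    pd μ (fun q => u q * v q) p = u p * pd μ v p + v p * pd μ u p := by
  simp [pd, fderiv_fun_mul hu hv]

lemma pd_sum {ι : Type*} {s : Finset ι} {w : ι → Pt → ℝ}
    (hw : ∀ i ∈ s, DifferentiableAt ℝ (w i) p) :
    pd μ (fun q => ∑ i ∈ s, w i q) p = ∑ i ∈ s, pd μ (w i) p := by
  simp [pd, fderiv_fun_sum hw]

lemma differentiableAt_fderiv_of_contDiffAt_two (hu : ContDiffAt ℝ 2 u p) :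
    DifferentiableAt ℝ (fderiv ℝ u) p :=
  (hu.fderiv_right (m := 1) (by norm_num)).differentiableAt one_ne_zero

lemma differentiableAt_pd (hu : ContDiffAt ℝ 2 u p) : DifferentiableAt ℝ (pd μ u) p :=
  (differentiableAt_fderiv_of_contDiffAt_two hu).clm_apply (differentiableAt_const _)

lemma pd_pd_eq_fderiv_fderiv (hu : ContDiffAt ℝ 2 u p) :
    pd μ (pd ν u) p = fderiv ℝ (fderiv ℝ u) p (Pi.single μ 1) (Pi.single ν 1) := by
  change fderiv ℝ (fun q => fderiv ℝ u q (Pi.single ν 1)) p (Pi.single μ 1) = _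
  rw [fderiv_clm_apply (differentiableAt_fderiv_of_contDiffAt_two hu) (differentiableAt_const _)]
  simp

lemma pd_comm (hu : ContDiffAt ℝ 2 u p) : pd μ (pd ν u) p = pd ν (pd μ u) p := by
  have hsymm : IsSymmSndFDerivAt ℝ u p := hu.isSymmSndFDerivAt (by simp)
  rw [pd_pd_eq_fderiv_fderiv μ ν hu, pd_pd_eq_fderiv_fderiv ν μ hu, hsymm.eq]

end PartialDerivatives

section FrameDerivatives

variable {f : Fin 3 → Fin 3 → Pt → ℝ} {u v : Pt → ℝ} {p : Pt} (i : Fin 3)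

lemma fr_neg : fr f i (fun q => -u q) p = -fr f i u p := by
  simp [fr, pd_neg]

lemma fr_mul (hu : DifferentiableAt ℝ u p) (hv : DifferentiableAt ℝ v p) :
    fr f i (fun q => u q * v q) p = u p * fr f i v p + v p * fr f i u p := by
  simp only [fr, pd_mul _ hu hv, Finset.mul_sum, ← Finset.sum_add_distrib]
  exact Finset.sum_congr rfl fun j _ => by ring

lemma fr_sum {ι : Type*} {s : Finset ι} {w : ι → Pt → ℝ}
    (hw : ∀ k ∈ s, DifferentiableAt ℝ (w k) p) :
    fr f i (fun q => ∑ k ∈ s, w k q) p = ∑ k ∈ s, fr f i (w k) p := by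
  simp only [fr, pd_sum _ hw, Finset.mul_sum]
  exact Finset.sum_comm

lemma differentiableAt_fr (hf : ∀ m, DifferentiableAt ℝ (f i m) p) (hu : ContDiffAt ℝ 2 u p) :
    DifferentiableAt ℝ (fr f i u) p :=
  DifferentiableAt.fun_sum fun m _ => (hf m).mul (differentiableAt_pd m.succ hu)

lemma pd_fr (μ : Fin 4) (hf : ∀ m, DifferentiableAt ℝ (f i m) p) (hu : ContDiffAt ℝ 2 u p) :
    pd μ (fr f i u) p = fr f i (pd μ u) p + ∑ m, pd μ (f i m) p * pd m.succ u p := by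
  have hterm (m : Fin 3) : DifferentiableAt ℝ (fun q => f i m q * pd m.succ u q) p :=
    (hf m).mul (differentiableAt_pd m.succ hu)
  change pd μ (fun q => ∑ m, f i m q * pd m.succ u q) p = _
  rw [pd_sum μ fun m _ => hterm m, fr, ← Finset.sum_add_distrib]
  refine Finset.sum_congr rfl fun m _ => ?_
  rw [pd_mul μ (hf m) (differentiableAt_pd m.succ hu), pd_comm μ m.succ hu]
  ring

end FrameDerivatives

/-- The coordinate components `[e_i, e_j]^l = e_i f_j^l − e_j f_i^l` of the commutator of two frame
vectors. -/
def frameBracket (f : Fin 3 → Fin 3 → Pt → ℝ) (i j l : Fin 3) (p : Pt) : ℝ :=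
  fr f i (f j l) p - fr f j (f i l) p

/-- The structure coefficients of the frame: the components `Σ_l f^b_l [e_i, e_j]^l` of the
commutators in the frame itself. -/
def structureCoeff (f fi : Fin 3 → Fin 3 → Pt → ℝ) (i j b : Fin 3) (p : Pt) : ℝ :=
  ∑ l, fi b l p * frameBracket f i j l p

/-- The antisymmetrized connection coefficients `Γ_ijb − Γ_jib`, that is, the frame components of
`∇_{e_i} e_j − ∇_{e_j} e_i`. -/
def connAlt (G : Fin 3 → Fin 3 → Fin 3 → Pt → ℝ) (i j b : Fin 3) (p : Pt) : ℝ :=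
  G i j b p - G j i b p

/-- The infinitesimal action on frame components `X_ij^b` of the frame motion `e_i ↦ −K_ic e_c`,
under which the dual frame moves by `e^b ↦ K_cb e^c`: the third index is contravariant. -/
def frameAction (K : Fin 3 → Fin 3 → Pt → ℝ) (X : Fin 3 → Fin 3 → Fin 3 → Pt → ℝ)
    (i j b : Fin 3) (p : Pt) : ℝ :=
  ∑ l, (K l b p * X i j l p - K i l p * X l j b p - K j l p * X i l b p)

lemma Tor_eq_structureCoeff_sub_connAlt (f fi : Fin 3 → Fin 3 → Pt → ℝ)
    (G : Fin 3 → Fin 3 → Fin 3 → Pt → ℝ) (i j b : Fin 3) :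
    Tor f fi G i j b = fun p => structureCoeff f fi i j b p - connAlt G i j b p := by
  funext p
  simp only [Tor, structureCoeff, frameBracket, connAlt]
  ring

lemma frameAction_Tor (f fi K : Fin 3 → Fin 3 → Pt → ℝ) (G : Fin 3 → Fin 3 → Fin 3 → Pt → ℝ)
    (i j b : Fin 3) (p : Pt) :
    frameAction K (Tor f fi G) i j b p =
      frameAction K (structureCoeff f fi) i j b p - frameAction K (connAlt G) i j b p := by
  simp only [frameAction, Tor_eq_structureCoeff_sub_connAlt, ← Finset.sum_sub_distrib]
  exact Finset.sum_congr rfl fun l _ => by ring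

section StructureCoefficients

variable {f fi K : Fin 3 → Fin 3 → Pt → ℝ} {p : Pt} {i j : Fin 3}

lemma pd_zero_frame (hEf : Ef f K) (i j : Fin 3) :
    pd 0 (f i j) = fun q => -∑ c, K i c q * f c j q :=
  funext fun q => eq_neg_of_add_eq_zero_left (hEf i j q)

lemma pd_zero_fr (hEf : Ef f K) {u : Pt → ℝ} (hf : ∀ m, DifferentiableAt ℝ (f i m) p)
    (hu : ContDiffAt ℝ 2 u p) :
    pd 0 (fr f i u) p = fr f i (pd 0 u) p - ∑ c, K i c p * fr f c u p := by
  have hframe : ∑ m, pd 0 (f i m) p * pd m.succ u p = -∑ c, K i c p * fr f c u p := by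
    simp only [pd_zero_frame hEf, fr, neg_mul, Finset.sum_mul, Finset.mul_sum, mul_assoc,
      Finset.sum_neg_distrib]
    rw [Finset.sum_comm]
  rw [pd_fr i 0 hf hu, hframe, sub_eq_add_neg]

lemma fr_pd_zero_frame (hEf : Ef f K) (hf : ∀ k m, DifferentiableAt ℝ (f k m) p)
    (hK : ∀ c, DifferentiableAt ℝ (K j c) p) (l : Fin 3) :
    fr f i (pd 0 (f j l)) p =
      -∑ c, (K j c p * fr f i (f c l) p + f c l p * fr f i (K j c) p) := by
  rw [pd_zero_frame hEf, fr_neg, fr_sum i fun c _ => (hK c).fun_mul (hf c l)]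
  simp only [fr_mul i (hK _) (hf _ l)]

lemma differentiableAt_frameBracket (hf : ∀ k m, ContDiffAt ℝ 2 (f k m) p) (l : Fin 3) :
    DifferentiableAt ℝ (frameBracket f i j l) p := by
  have hfd (k m : Fin 3) : DifferentiableAt ℝ (f k m) p := (hf k m).differentiableAt two_ne_zero
  exact (differentiableAt_fr i (hfd i) (hf j l)).sub (differentiableAt_fr j (hfd j) (hf i l))

lemma pd_zero_frameBracket (hEf : Ef f K) (hf : ∀ k m, ContDiffAt ℝ 2 (f k m) p)
    (hK : ∀ k m, DifferentiableAt ℝ (K k m) p) (l : Fin 3) :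
    pd 0 (frameBracket f i j l) p =
      -∑ c, (K i c p * frameBracket f c j l p + K j c p * frameBracket f i c l p)
        - ∑ c, f c l p * (fr f i (K j c) p - fr f j (K i c) p) := by
  have hfd (k m : Fin 3) : DifferentiableAt ℝ (f k m) p := (hf k m).differentiableAt two_ne_zero
  change pd 0 (fun q => fr f i (f j l) q - fr f j (f i l) q) p = _
  rw [pd_sub 0 (differentiableAt_fr i (hfd i) (hf j l)) (differentiableAt_fr j (hfd j) (hf i l)),
    pd_zero_fr hEf (hfd i) (hf j l), pd_zero_fr hEf (hfd j) (hf i l),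
    fr_pd_zero_frame hEf hfd (hK j), fr_pd_zero_frame hEf hfd (hK i)]
  simp only [frameBracket, ← Finset.sum_neg_distrib, ← Finset.sum_sub_distrib]
  exact Finset.sum_congr rfl fun c _ => by ring

lemma sum_inverse_mul_sum_frame {b : Fin 3} (hinv : ∀ c, ∑ l, f c l p * fi b l p = kd c b)
    (w : Fin 3 → ℝ) : ∑ l, fi b l p * ∑ c, f c l p * w c = w b := by
  calc ∑ l, fi b l p * ∑ c, f c l p * w c = ∑ c, (∑ l, f c l p * fi b l p) * w c := by
        simp only [Finset.mul_sum, Finset.sum_mul]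
        rw [Finset.sum_comm]
        exact Finset.sum_congr rfl fun c _ => Finset.sum_congr rfl fun l _ => by ring
    _ = w b := by simp [hinv, kd]

lemma differentiableAt_structureCoeff {b : Fin 3} (hf : ∀ k m, ContDiffAt ℝ 2 (f k m) p)
    (hfi : ∀ l, DifferentiableAt ℝ (fi b l) p) :
    DifferentiableAt ℝ (structureCoeff f fi i j b) p :=
  DifferentiableAt.fun_sum fun l _ => (hfi l).mul (differentiableAt_frameBracket hf l)

lemma pd_zero_structureCoeff {b : Fin 3} (hf : ∀ k m, ContDiffAt ℝ 2 (f k m) p)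
    (hfi : ∀ l, DifferentiableAt ℝ (fi b l) p) (hK : ∀ k m, DifferentiableAt ℝ (K k m) p)
    (hinv : ∀ c, ∑ l, f c l p * fi b l p = kd c b) (hEf : Ef f K) (hEfi : Efi fi K) :
    pd 0 (structureCoeff f fi i j b) p =
      frameAction K (structureCoeff f fi) i j b p
        - (fr f i (K j b) p - fr f j (K i b) p) := by
  have hbracket (l : Fin 3) : DifferentiableAt ℝ (frameBracket f i j l) p :=
    differentiableAt_frameBracket hf l
  have hdual (l : Fin 3) : pd 0 (fi b l) p = ∑ c, K c b p * fi c l p := sub_eq_zero.1 (hEfi b l p)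
  have hleibniz : pd 0 (structureCoeff f fi i j b) p =
      ∑ l, (fi b l p * pd 0 (frameBracket f i j l) p
        + frameBracket f i j l p * pd 0 (fi b l) p) := by
    change pd 0 (fun q => ∑ l, fi b l q * frameBracket f i j l q) p = _
    rw [pd_sum 0 fun l _ => (hfi l).fun_mul (hbracket l)]
    exact Finset.sum_congr rfl fun l _ => pd_mul 0 (hfi l) (hbracket l)
  rw [hleibniz, ← sum_inverse_mul_sum_frame hinv fun c => fr f i (K j c) p - fr f j (K i c) p]
  simp only [pd_zero_frameBracket hEf hf hK, hdual, frameAction, structureCoeff,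
    Fin.sum_univ_three]
  ring

end StructureCoefficients

section ConnectionCoefficients

variable {f K : Fin 3 → Fin 3 → Pt → ℝ} {G : Fin 3 → Fin 3 → Fin 3 → Pt → ℝ} {p : Pt}

lemma kd_comm (i j : Fin 3) : kd i j = kd j i := by
  simp [kd, eq_comm]

lemma DtK_comm (hKsym : ∀ i j, K i j = K j i) (j b i : Fin 3) (p : Pt) :
    DtK f K G j b i p = DtK f K G j i b p := by
  simp only [DtK, hKsym b, hKsym _ i]
  ring

lemma Rb0_eq (hKsym : ∀ i j, K i j = K j i) (j : Fin 3) (p : Pt) :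
    Rb0 f K G j p =
      (∑ c, fr f c (K c j) p) - (∑ c, ∑ l, G c c l p * K l j p)
        - (∑ c, ∑ l, G c j l p * K c l p) - fr f j (trK K) p := by
  have hdiv : ∑ c, DtK f K G c j c p = ∑ c, DtK f K G c c j p :=
    Finset.sum_congr rfl fun c _ => DtK_comm hKsym c j c p
  rw [Rb0, hdiv]
  simp only [DtK, Finset.sum_sub_distrib]

lemma EG.pd_zero_eq {i j b : Fin 3} (hKsym : ∀ i j, K i j = K j i) (h : EG f K G i j b p) :
    pd 0 (G i j b) p =
      DtK f K G j b i p - DtK f K G b j i p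
        + kd i b * Rb0 f K G j p - kd i j * Rb0 f K G b p
        - ∑ c, K i c p * G c j b p := by
  simp only [EG, ← Rb0_eq hKsym] at h
  simp only [DtK]
  linear_combination h

lemma DtK_sub_DtK (hKsym : ∀ i j, K i j = K j i) (hGanti : ∀ i j b, G i j b p = -G i b j p)
    (i j b : Fin 3) :
    DtK f K G j b i p - DtK f K G i b j p =
      fr f j (K i b) p - fr f i (K j b) p
        + ∑ l, (K l b p * connAlt G i j l p + K i l p * G j l b p - K j l p * G i l b p) := by
  have hconn (x y : Fin 3) : ∑ l, G x b l p * K l y p = -∑ l, K y l p * G x l b p := by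
    rw [← Finset.sum_neg_distrib]
    exact Finset.sum_congr rfl fun l _ => by rw [hGanti x b l, hKsym l y]; ring
  have hdual (x y : Fin 3) : ∑ l, G x y l p * K b l p = ∑ l, K l b p * G x y l p :=
    Finset.sum_congr rfl fun l _ => by rw [hKsym b l]; ring
  rw [hKsym i b, hKsym j b]
  simp only [DtK, connAlt, mul_sub, Finset.sum_add_distrib, Finset.sum_sub_distrib]
  linear_combination hconn i j - hconn j i + hdual i j - hdual j i

lemma differentiableAt_connAlt (hG : ∀ i j b, DifferentiableAt ℝ (G i j b) p) (i j b : Fin 3) :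
    DifferentiableAt ℝ (connAlt G i j b) p :=
  (hG i j b).sub (hG j i b)

lemma pd_zero_connAlt (hG : ∀ i j b, DifferentiableAt ℝ (G i j b) p)
    (hKsym : ∀ i j, K i j = K j i) (hGanti : ∀ i j b, G i j b p = -G i b j p)
    (hEG : ∀ i j b, EG f K G i j b p) (i j b : Fin 3) :
    pd 0 (connAlt G i j b) p =
      frameAction K (connAlt G) i j b p - (fr f i (K j b) p - fr f j (K i b) p)
        + kd i b * Rb0 f K G j p - kd j b * Rb0 f K G i p := by
  change pd 0 (fun q => G i j b q - G j i b q) p = _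
  rw [pd_sub 0 (hG i j b) (hG j i b), (hEG i j b).pd_zero_eq hKsym, (hEG j i b).pd_zero_eq hKsym,
    DtK_comm hKsym b j i, kd_comm j i]
  have hconn : frameAction K (connAlt G) i j b p =
      (∑ l, (K l b p * connAlt G i j l p + K i l p * G j l b p - K j l p * G i l b p))
        - ∑ l, K i l p * G l j b p + ∑ l, K j l p * G l i b p := by
    simp only [frameAction, ← Finset.sum_sub_distrib, ← Finset.sum_add_distrib]
    exact Finset.sum_congr rfl fun l _ => by simp only [connAlt]; ring
  linear_combination DtK_sub_DtK (f := f) hKsym hGanti i j b - hconn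

end ConnectionCoefficients

theorem torsion_propagation_general
    {f fi K : Fin 3 → Fin 3 → Pt → ℝ} {G : Fin 3 → Fin 3 → Fin 3 → Pt → ℝ} {p : Pt}
    (hf : ∀ i j, ContDiffAt ℝ 2 (f i j) p) (hfi : ∀ i j, DifferentiableAt ℝ (fi i j) p)
    (hK : ∀ i j, DifferentiableAt ℝ (K i j) p) (hG : ∀ i j b, DifferentiableAt ℝ (G i j b) p)
    (hinv : ∀ i b, ∑ j, f i j p * fi b j p = kd i b)
    (hKsym : ∀ i j, K i j = K j i) (hGanti : ∀ i j b, G i j b p = -G i b j p)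
    (hEf : Ef f K) (hEfi : Efi fi K) (hEG : ∀ i j b, EG f K G i j b p) (i j b : Fin 3) :
    pd 0 (Tor f fi G i j b) p =
      (∑ l, (K b l p * Tor f fi G i j l p - K i l p * Tor f fi G l j b p
          - K j l p * Tor f fi G i l b p))
        - kd i b * Rb0 f K G j p + kd j b * Rb0 f K G i p := by
  have haction : (∑ l, (K b l p * Tor f fi G i j l p - K i l p * Tor f fi G l j b p
      - K j l p * Tor f fi G i l b p)) = frameAction K (Tor f fi G) i j b p := by
    simp only [frameAction, hKsym b]
  rw [haction, frameAction_Tor, Tor_eq_structureCoeff_sub_connAlt,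
    pd_sub 0 (differentiableAt_structureCoeff hf (hfi b)) (differentiableAt_connAlt hG i j b),
    pd_zero_structureCoeff hf (hfi b) hK (fun c => hinv c b) hEf hEfi,
    pd_zero_connAlt hG hKsym hGanti hEG]
  ring

/-- equation (e0Cijb) of Lemma 4.4: propagation equation for the torsion. -/
theorem torsion_propagation
    (f fi K : Fin 3 → Fin 3 → Pt → ℝ) (G : Fin 3 → Fin 3 → Fin 3 → Pt → ℝ)
    (hf : ∀ i j, ContDiff ℝ (⊤ : ℕ∞) (f i j)) (hfi : ∀ i j, ContDiff ℝ (⊤ : ℕ∞) (fi i j))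
    (hK : ∀ i j, ContDiff ℝ (⊤ : ℕ∞) (K i j)) (hG : ∀ i j b, ContDiff ℝ (⊤ : ℕ∞) (G i j b))
    (hinv1 : ∀ (i b : Fin 3) (p : Pt), (∑ j : Fin 3, f i j p * fi b j p) = kd i b)
    (hinv2 : ∀ (j i : Fin 3) (p : Pt), (∑ b : Fin 3, fi b j p * f b i p) = kd j i)
    (hKsym : ∀ (i j : Fin 3) (p : Pt), K i j p = K j i p)
    (hGanti : ∀ (i j b : Fin 3) (p : Pt), G i j b p = - G i b j p)
    (hEf : Ef f K) (hEfi : Efi fi K)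
    (hEG : ∀ (i j b : Fin 3) (p : Pt), EG f K G i j b p) :
    ∀ (i j b : Fin 3) (p : Pt),
      pd 0 (Tor f fi G i j b) p
        = (∑ l : Fin 3, (K b l p * Tor f fi G i j l p
            - K i l p * Tor f fi G l j b p
            - K j l p * Tor f fi G i l b p))
          - kd i b * Rb0 f K G j p + kd j b * Rb0 f K G i p :=
  fun i j b p => torsion_propagation_general
    (fun i j => (hf i j).contDiffAt.of_le (WithTop.coe_le_coe.2 le_top))
    (fun i j => (hfi i j).differentiable (by simp) p)
    (fun i j => (hK i j).differentiable (by simp) p)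
    (fun i j b => (hG i j b).differentiable (by simp) p)
    (fun i b => hinv1 i b p) (fun i j => funext (hKsym i j)) (fun i j b => hGanti i j b p)
    hEf hEfi (fun i j b => hEG i j b p) i j b
end
end

section
/- Pure-trace property of the symmetric spatial modified Ricci components (equation (Rijeq) of Lemma 4.4): assume K_ij = K_ji and Γ_ijb = −Γ_ibj identically on ℝ⁴, and that (E-K) holds at every point of ℝ⁴. Then for all i, j ∈ {1,2,3}: e_0 K_ij + (tr K) K_ij + ½( r̂_ij + r̂_ji ) = δ_ij ( ∂_t (tr K) + |K|² ) at every point of ℝ⁴. -/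
open scoped BigOperators

noncomputable section

/-!
Let `R̂ = Σ_i r̂_ii` be the modified scalar curvature. Since `Γ` is antisymmetric in its last two
indices, the bracket multiplying `-½ δ_ij` in (E-K) is `-R̂ + |K|² - (tr K)²`, and the remaining
terms are `-½ (r̂_ij + r̂_ji)`. Hence (E-K) reads
`e_0 K_ij + (tr K) K_ij + ½ (r̂_ij + r̂_ji) = ½ δ_ij (R̂ - |K|² + (tr K)²)`.
Its trace over the three spatial indices gives `∂_t (tr K) + |K|² = ½ (R̂ - |K|² + (tr K)²)`, so the
right-hand side is `δ_ij (∂_t (tr K) + |K|²)`.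
-/

section Derivatives

variable {ι : Type*} {s : Finset ι} {u : ι → Pt → ℝ} {p : Pt}

theorem pd_fun_sum (μ : Fin 4) (hu : ∀ b ∈ s, DifferentiableAt ℝ (u b) p) :
    pd μ (fun q => ∑ b ∈ s, u b q) p = ∑ b ∈ s, pd μ (u b) p := by
  simp only [pd, fderiv_fun_sum hu, sum_apply]

theorem fr_fun_sum (f : Fin 3 → Fin 3 → Pt → ℝ) (i : Fin 3)
    (hu : ∀ b ∈ s, DifferentiableAt ℝ (u b) p) :
    fr f i (fun q => ∑ b ∈ s, u b q) p = ∑ b ∈ s, fr f i (u b) p := by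
  simp only [fr, pd_fun_sum _ hu, Finset.mul_sum]
  exact Finset.sum_comm

theorem fr_neg_s14 (f : Fin 3 → Fin 3 → Pt → ℝ) (i : Fin 3) (v : Pt → ℝ) (p : Pt) :
    fr f i (-v) p = -fr f i v p := by
  simp [fr, pd, fderiv_neg]

end Derivatives

/-- Modified scalar curvature `R̂ = Σ_i r̂_ii`. -/
def scalarCurv (f : Fin 3 → Fin 3 → Pt → ℝ) (G : Fin 3 → Fin 3 → Fin 3 → Pt → ℝ) (p : Pt) : ℝ :=
  ∑ i : Fin 3, rhat f G i i p

section Curvature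

variable {f K : Fin 3 → Fin 3 → Pt → ℝ} {G : Fin 3 → Fin 3 → Fin 3 → Pt → ℝ} {p : Pt}

theorem rhat_eq (hG : ∀ i j b, DifferentiableAt ℝ (G i j b) p)
    (hanti : ∀ i j b, G i j b p = -G i b j p) (i j : Fin 3) :
    rhat f G i j p = (∑ b, fr f b (G i j b) p) - fr f i (fun q => ∑ b, G b j b q) p
      - (∑ b, ∑ c, G b b c p * G i j c p) - ∑ b, ∑ c, G b i c p * G c j b p := by
  have hquad : ∑ b, ∑ c, G i b c p * G b j c p = -∑ b, ∑ c, G i b c p * G c j b p := by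
    have hflip (b c : Fin 3) : G i b c p * G b j c p = -(G i c b p * G b j c p) := by
      rw [hanti i b c, neg_mul]
    simp only [hflip, Finset.sum_neg_distrib]
    rw [Finset.sum_comm]
  rw [fr_fun_sum f i fun b _ => hG b j b]
  simp only [rhat, Rhat, sub_mul, Finset.sum_sub_distrib, Finset.sum_add_distrib, hquad]
  ring

theorem sum_fr_contraction_eq_neg (hG : ∀ i j b, DifferentiableAt ℝ (G i j b) p)
    (hanti : ∀ i j b q, G i j b q = -G i b j q) :
    ∑ i, ∑ b, fr f b (G i i b) p = -∑ a, fr f a (fun q => ∑ b, G b a b q) p := by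
  have hfr (a b : Fin 3) : fr f b (G a a b) p = -fr f b (G a b a) p := by
    rw [show G a a b = -G a b a from funext (hanti a a b), fr_neg_s14]
  simp only [fr_fun_sum f _ fun b _ => hG b _ b, hfr, Finset.sum_neg_distrib]
  rw [Finset.sum_comm]

theorem scalarCurv_eq (hG : ∀ i j b, DifferentiableAt ℝ (G i j b) p)
    (hanti : ∀ i j b q, G i j b q = -G i b j q) :
    scalarCurv f G p = -(2 * (∑ a, fr f a (fun q => ∑ b, G b a b q) p)
      + (∑ b, ∑ a, ∑ c, G b a c p * G c a b p)
      + ∑ c, (∑ b, G b b c p) * ∑ a, G a a c p) := by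
  have hswap : ∑ a, ∑ b, ∑ c, G b a c p * G c a b p = ∑ b, ∑ a, ∑ c, G b a c p * G c a b p :=
    Finset.sum_comm
  have hsq : ∑ i, ∑ b, ∑ c, G b b c p * G i i c p = ∑ c, (∑ b, G b b c p) * ∑ a, G a a c p := by
    simp only [Fin.sum_univ_three]
    ring
  simp only [scalarCurv, rhat_eq hG fun i j b => hanti i j b p, Finset.sum_sub_distrib,
    sum_fr_contraction_eq_neg hG hanti, hswap, hsq]
  ring

theorem EK_iff (hG : ∀ i j b, DifferentiableAt ℝ (G i j b) p)
    (hanti : ∀ i j b q, G i j b q = -G i b j q) (i j : Fin 3) :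
    EK f K G i j p ↔ pd 0 (K i j) p + trK K p * K i j p
        + (1 / 2) * (rhat f G i j p + rhat f G j i p)
      = kd i j * ((1 / 2) * (scalarCurv f G p - nK2 K p + trK K p ^ 2)) := by
  rw [EK, rhat_eq hG (fun i j b => hanti i j b p), rhat_eq hG (fun i j b => hanti i j b p),
    scalarCurv_eq hG hanti]
  constructor <;> intro h <;> linear_combination h

theorem pd_trK (hK : ∀ c, DifferentiableAt ℝ (K c c) p) (μ : Fin 4) :
    pd μ (trK K) p = ∑ c, pd μ (K c c) p :=
  pd_fun_sum μ fun c _ => hK c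

theorem pd_trK_add_nK2 (hK : ∀ c, DifferentiableAt ℝ (K c c) p)
    (hG : ∀ i j b, DifferentiableAt ℝ (G i j b) p) (hanti : ∀ i j b q, G i j b q = -G i b j q)
    (hEK : ∀ c, EK f K G c c p) :
    pd 0 (trK K) p + nK2 K p = (1 / 2) * (scalarCurv f G p - nK2 K p + trK K p ^ 2) := by
  have htrace : pd 0 (trK K) p + trK K p ^ 2 + scalarCurv f G p
      = 3 * ((1 / 2) * (scalarCurv f G p - nK2 K p + trK K p ^ 2)) := calc
    _ = ∑ c, (pd 0 (K c c) p + trK K p * K c c p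
          + (1 / 2) * (rhat f G c c p + rhat f G c c p)) := by
      simp only [pd_trK hK, scalarCurv, Finset.sum_add_distrib, ← Finset.mul_sum]
      rw [show ∑ c, K c c p = trK K p from rfl]
      ring
    _ = ∑ c : Fin 3, kd c c * ((1 / 2) * (scalarCurv f G p - nK2 K p + trK K p ^ 2)) :=
      Finset.sum_congr rfl fun c _ => (EK_iff hG hanti c c).1 (hEK c)
    _ = 3 * ((1 / 2) * (scalarCurv f G p - nK2 K p + trK K p ^ 2)) := by
      simp [kd]
  linear_combination htrace

theorem symmetric_Ricci_pure_trace_general (hK : ∀ c, DifferentiableAt ℝ (K c c) p)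
    (hG : ∀ i j b, DifferentiableAt ℝ (G i j b) p) (hanti : ∀ i j b q, G i j b q = -G i b j q)
    (hEK : ∀ i j, EK f K G i j p) (i j : Fin 3) :
    pd 0 (K i j) p + trK K p * K i j p + (1 / 2) * (rhat f G i j p + rhat f G j i p)
      = kd i j * (pd 0 (trK K) p + nK2 K p) := by
  rw [pd_trK_add_nK2 hK hG hanti fun c => hEK c c]
  exact (EK_iff hG hanti i j).1 (hEK i j)

end Curvature

/-- equation (Rijeq) of Lemma 4.4: the symmetric spatial modified
Ricci components are pure trace. -/
theorem symmetric_Ricci_pure_trace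
    (f K : Fin 3 → Fin 3 → Pt → ℝ) (G : Fin 3 → Fin 3 → Fin 3 → Pt → ℝ)
    (hf : ∀ i j, ContDiff ℝ (⊤ : ℕ∞) (f i j))
    (hK : ∀ i j, ContDiff ℝ (⊤ : ℕ∞) (K i j)) (hG : ∀ i j b, ContDiff ℝ (⊤ : ℕ∞) (G i j b))
    (hKsym : ∀ (i j : Fin 3) (p : Pt), K i j p = K j i p)
    (hGanti : ∀ (i j b : Fin 3) (p : Pt), G i j b p = - G i b j p)
    (hEK : ∀ (i j : Fin 3) (p : Pt), EK f K G i j p) :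
    ∀ (i j : Fin 3) (p : Pt),
      pd 0 (K i j) p + trK K p * K i j p
        + (1 / 2) * (rhat f G i j p + rhat f G j i p)
      = kd i j * (pd 0 (trK K) p + nK2 K p) :=
  fun i j p => symmetric_Ricci_pure_trace_general
    (fun c => (hK c c).contDiffAt.differentiableAt (by simp))
    (fun i j b => (hG i j b).contDiffAt.differentiableAt (by simp)) hGanti (hEK · · p) i j
end
end
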